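/- There exists an arrangement of 8 pseudolines A and an 8-aligned graph consisting of a single edge e of alignment complexity (4,−,−) (respectively, a single 1-anchored edge that is 3-crossed, or a single 2-anchored edge that is 2-crossed) such that A is stretchable but the aligned graph has no straight-line aligned drawing. -/

import Mathlib

open Set

open scoped Classical

noncomputable section

/-- The plane. -/
abbrev Pt : Type := EuclideanSpace ℝ (Fin 2)

/-- A (topologically) planar embedded graph: vertices are points of the plane,
edges are drawn as simple arcs that pairwise intersect only in common endpoints
and pass through no other vertex. -/
structure EmbeddedGraph (V : Type) where
  pos : V → Pt
  posInj : Function.Injective pos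
  G : SimpleGraph V
  arc : ∀ ⦃u v : V⦄, G.Adj u v → Set Pt
  arc_symm : ∀ {u v : V} (h : G.Adj u v), arc h = arc h.symm
  arc_curve : ∀ {u v : V} (h : G.Adj u v), ∃ γ : ℝ → Pt,
    ContinuousOn γ (Icc 0 1) ∧ InjOn γ (Icc 0 1) ∧
    γ 0 = pos u ∧ γ 1 = pos v ∧ γ '' (Icc 0 1) = arc h
  arc_inter : ∀ {u v x y : V} (h : G.Adj u v) (h' : G.Adj x y),
    (s(u, v) : Sym2 V) ≠ s(x, y) →
      arc h ∩ arc h' ⊆ ({pos u, pos v} : Set Pt) ∩ {pos x, pos y}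
  arc_vertex : ∀ {u v : V} (h : G.Adj u v) (w : V), pos w ∈ arc h → w = u ∨ w = v

namespace EmbeddedGraph

variable {V : Type} (E : EmbeddedGraph V)

/-- The closed point set covered by the drawing of the graph. -/
def image : Set Pt := (range E.pos) ∪ ⋃ (u : V) (v : V) (h : E.G.Adj u v), E.arc h

/-- A pseudoline with respect to an embedded graph: a simple curve going to
infinity on both ends that contains each edge entirely or meets it in at most
one point. -/
def IsPseudoline (c : ℝ → Pt) : Prop :=
  Continuous c ∧ Function.Injective c ∧
    Filter.Tendsto c (Filter.cocompact ℝ) (Filter.cocompact Pt) ∧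
    ∀ {u v : V} (h : E.G.Adj u v),
      E.arc h ⊆ range c ∨ (E.arc h ∩ range c).Subsingleton

/-- An arrangement of `k` pairwise crossing pseudolines with respect to `E`. -/
def IsArrangement {k : ℕ} (A : Fin k → ℝ → Pt) : Prop :=
  (∀ i, E.IsPseudoline (A i)) ∧
    ∀ i j, i ≠ j → ∃ p : Pt, range (A i) ∩ range (A j) = {p}

/-- The open interior of an edge. -/
def arcInterior {u v : V} (h : E.G.Adj u v) : Set Pt :=
  E.arc h \ {E.pos u, E.pos v}

variable {k : ℕ} (A : Fin k → ℝ → Pt)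

/-- A vertex lying on some pseudoline. -/
def AlignedVertex (v : V) : Prop := ∃ i, E.pos v ∈ range (A i)

def FreeVertex (v : V) : Prop := ¬ E.AlignedVertex A v

/-- An edge lying entirely on some pseudoline. -/
def EdgeAligned {u v : V} (h : E.G.Adj u v) : Prop := ∃ i, E.arc h ⊆ range (A i)

/-- The pseudolines crossing the interior of an edge (not containing it). -/
def crossedSet {u v : V} (h : E.G.Adj u v) : Set (Fin k) :=
  {i | (E.arcInterior h ∩ range (A i)).Nonempty ∧ ¬ E.arc h ⊆ range (A i)}

/-- The number of endpoints of an edge anchored on (distinct) pseudolines not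
containing the edge. -/
def anchorNum {u v : V} (h : E.G.Adj u v) : ℕ :=
  if ∃ i j, i ≠ j ∧ E.pos u ∈ range (A i) ∧ E.pos v ∈ range (A j) ∧
      ¬ E.arc h ⊆ range (A i) ∧ ¬ E.arc h ⊆ range (A j) then 2
  else if (∃ i, E.pos u ∈ range (A i) ∧ ¬ E.arc h ⊆ range (A i)) ∨
      (∃ i, E.pos v ∈ range (A i) ∧ ¬ E.arc h ⊆ range (A i)) then 1
  else 0

/-- An edge is admissible for the bound `l` (`none` = this kind of edge is
forbidden, `some m` = at most `m`-crossed). -/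
def edgeOk (l : Option ℕ) {u v : V} (h : E.G.Adj u v) : Prop :=
  ∃ m, l = some m ∧ (E.crossedSet A h).ncard ≤ m

/-- Alignment complexity `(l0, l1, l2)`. -/
def HasComplexity (l0 l1 l2 : Option ℕ) : Prop :=
  ∀ {u v : V} (h : E.G.Adj u v),
    E.edgeOk A (if E.anchorNum A h = 0 then l0
      else if E.anchorNum A h = 1 then l1 else l2) h

/-- A free edge: no endpoint on a pseudoline, no interior crossing, not aligned. -/
def FreeEdge {u v : V} (h : E.G.Adj u v) : Prop :=
  E.FreeVertex A u ∧ E.FreeVertex A v ∧ E.crossedSet A h = ∅ ∧ ¬ E.EdgeAligned A h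

/-- Faces of the embedded graph. -/
def faceOf (x : Pt) : Set Pt := connectedComponentIn (E.image)ᶜ x

def IsFace (F : Set Pt) : Prop := ∃ x, x ∉ E.image ∧ F = E.faceOf x

/-- The outer (unbounded) region. -/
def outerRegion : Set Pt := {x | x ∉ E.image ∧ ¬ Bornology.IsBounded (E.faceOf x)}

def OnOuter (v : V) : Prop := E.pos v ∈ frontier E.outerRegion

def OuterEdge {u v : V} (h : E.G.Adj u v) : Prop := E.arc h ⊆ frontier E.outerRegion

def InteriorEdge {u v : V} (h : E.G.Adj u v) : Prop := ¬ E.OuterEdge h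

def IsChord {u v : V} (h : E.G.Adj u v) : Prop :=
  E.InteriorEdge h ∧ E.OnOuter u ∧ E.OnOuter v

/-- A triangulation: biconnected, all bounded faces are triangles, and the outer
face is bounded by a simple cycle. -/
def IsTriangulation : Prop :=
  E.G.Connected ∧ (∀ v : V, (E.G.comap (Subtype.val : {w : V // w ≠ v} → V)).Connected) ∧
  (∀ F : Set Pt, E.IsFace F → Bornology.IsBounded F →
    ∃ a b c : V, a ≠ b ∧ a ≠ c ∧ b ≠ c ∧ E.G.Adj a b ∧ E.G.Adj b c ∧ E.G.Adj a c ∧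
      {v : V | E.pos v ∈ frontier F} = {a, b, c}) ∧
  (∃ (v : V) (w : E.G.Walk v v), w.IsCycle ∧
    frontier E.outerRegion =
      ⋃ (x : V) (y : V) (h : E.G.Adj x y) (_ : s(x, y) ∈ w.edges), E.arc h)

/-- Proper `k`-aligned graph. -/
def Proper : Prop :=
  (∀ {u v : V} (h : E.G.Adj u v), E.EdgeAligned A h → E.crossedSet A h = ∅) ∧
  (2 ≤ k →
    (∀ {u v : V} (h : E.G.Adj u v), E.OuterEdge h → (E.crossedSet A h).ncard = 1) ∧
    (∀ i, ∃ p q : Pt, p ≠ q ∧ frontier E.outerRegion ∩ range (A i) = {p, q}) ∧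
    (∀ i j, i ≠ j → range (A i) ∩ range (A j) ∩ E.outerRegion = ∅))

/-- The set of points strictly inside a triangle of the drawing. -/
def TriInside {a b c : V} (hab : E.G.Adj a b) (hbc : E.G.Adj b c)
    (hac : E.G.Adj a c) (x : Pt) : Prop :=
  x ∉ (E.arc hab ∪ E.arc hbc ∪ E.arc hac) ∧
    Bornology.IsBounded
      (connectedComponentIn (E.arc hab ∪ E.arc hbc ∪ E.arc hac)ᶜ x)

/-- `E` has a separating triangle. -/
def HasSepTriangle : Prop :=
  ∃ (a b c : V) (hab : E.G.Adj a b) (hbc : E.G.Adj b c) (hac : E.G.Adj a c),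
    (∃ v : V, E.TriInside hab hbc hac (E.pos v)) ∧
    (∃ v : V, E.pos v ∉ (E.arc hab ∪ E.arc hbc ∪ E.arc hac) ∧
      ¬ E.TriInside hab hbc hac (E.pos v))

end EmbeddedGraph

/-- A straight line in the plane. -/
def IsLine (l : Set Pt) : Prop :=
  ∃ p d : Pt, d ≠ 0 ∧ l = {x : Pt | ∃ t : ℝ, x = p + t • d}

/-- Stretchability of a pseudoline arrangement: some homeomorphism of the plane
takes it to a line arrangement. -/
def Stretchable {k : ℕ} (A : Fin k → ℝ → Pt) : Prop :=
  ∃ (L : Fin k → Set Pt) (h : Pt ≃ₜ Pt),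
    (∀ i, IsLine (L i)) ∧ ∀ i, h '' range (A i) = L i

namespace EmbeddedGraph

variable {V : Type} (E : EmbeddedGraph V) {k : ℕ} (A : Fin k → ℝ → Pt)

/-- A straight-line aligned drawing `(Γ, L)` of the aligned graph `(E, A)`:
a homeomorphism of the plane takes vertices to `Γ`, every arc to the
corresponding straight segment, and every pseudoline to the corresponding line. -/
def IsAlignedDrawing (Γ : V → Pt) (L : Fin k → Set Pt) : Prop :=
  (∀ i, IsLine (L i)) ∧
  ∃ h : Pt ≃ₜ Pt, (∀ v : V, h (E.pos v) = Γ v) ∧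
    (∀ {u v : V} (huv : E.G.Adj u v),
      h '' E.arc huv = segment ℝ (Γ u) (Γ v)) ∧
    ∀ i, h '' range (A i) = L i

end EmbeddedGraph

/-- The union of an arrangement of curves. -/
def arrUnion {k : ℕ} (A : Fin k → ℝ → Pt) : Set Pt := ⋃ i, range (A i)

/-- A cell of the arrangement. -/
def IsCell {k : ℕ} (A : Fin k → ℝ → Pt) (C : Set Pt) : Prop :=
  ∃ x, x ∉ arrUnion A ∧ C = connectedComponentIn (arrUnion A)ᶜ x

/-- A pseudosegment of the pseudoline `A i`: a connected component of `A i`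
minus the other pseudolines. -/
def IsPseudosegment {k : ℕ} (A : Fin k → ℝ → Pt) (i : Fin k) (S : Set Pt) : Prop :=
  ∃ x, x ∈ range (A i) \ ⋃ j ∈ ({i}ᶜ : Set (Fin k)), range (A j) ∧
    S = connectedComponentIn (range (A i) \ ⋃ j ∈ ({i}ᶜ : Set (Fin k)), range (A j)) x

/-- Biconnectivity of an abstract graph. -/
def Biconnected {V : Type} (G : SimpleGraph V) : Prop :=
  G.Connected ∧ ∀ v : V, (G.comap (Subtype.val : {w : V // w ≠ v} → V)).Connected

end

/-- There is an arrangement of 8 pairwise crossing pseudolines that is stretchable,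
together with a single-edge aligned graph whose unique edge is `a`-anchored and
`c`-crossed, admitting no straight-line aligned drawing. -/
def ExistsBadSingleEdge (a c : ℕ) : Prop :=
  ∃ (E : EmbeddedGraph (Fin 2)) (A : Fin 8 → ℝ → Pt) (h : E.G.Adj 0 1),
    E.IsArrangement A ∧ Stretchable A ∧
    E.anchorNum A h = a ∧ (E.crossedSet A h).ncard = c ∧ ¬ E.EdgeAligned A h ∧
    ¬ ∃ (Γ : Fin 2 → Pt) (L : Fin 8 → Set Pt), E.IsAlignedDrawing A Γ L

/-! ### The concrete configuration

Pappus configuration: `A1 = (-5,5)`, `A2 = (1,8)`, `A3 = (15,15)` on line `0`,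
`B1 = (-6,-6)`, `B2 = (-1,-5)`, `B3 = (4,-4)` on line `1`, and lines
`2 = A1B2`, `3 = A2B1`, `4 = A1B3`, `5 = A3B1`, `6 = A2B3`, `7 = A3B2`.  The three
cross points are `P = (-3,0)`, `Q = (0,0)`, `R = (3,0)`.  The edge runs from (just above)
`P`, passes strictly below `Q`, and ends at (just above) `R`. -/

namespace PappusEdge

def la : Fin 8 → ℤ := ![1, 1, 5, 2, 1, 1, 4, 5]
def lb : Fin 8 → ℤ := ![-2, -5, 2, -1, 1, -1, 1, -4]
def lc : Fin 8 → ℤ := ![15, -24, 15, 6, 0, 0, -12, -15]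

/-- The affine functional defining line `i`. -/
noncomputable def ev (i : Fin 8) (x : Pt) : ℝ := (la i : ℝ) * x 0 + (lb i : ℝ) * x 1 + (lc i : ℝ)

/-- Parametrization of line `i`. -/
noncomputable def ln (i : Fin 8) (t : ℝ) : Pt :=
  !₂[-((lc i : ℝ) * la i) / ((la i : ℝ) ^ 2 + (lb i : ℝ) ^ 2) - lb i * t,
    -((lc i : ℝ) * lb i) / ((la i : ℝ) ^ 2 + (lb i : ℝ) ^ 2) + la i * t]

/-- The parabolic arc. -/
noncomputable def gam (e0 e1 e2 : ℤ) (t : ℝ) : Pt :=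
  !₂[6 * t - 3, ((e0 : ℝ) + e1 * t + e2 * t ^ 2) / 10]

theorem la_pos (i : Fin 8) : 0 < la i := by revert i; decide

theorem laR_pos (i : Fin 8) : (0 : ℝ) < la i := by exact_mod_cast la_pos i

theorem nsq_ne (i : Fin 8) : (la i : ℝ) ^ 2 + (lb i : ℝ) ^ 2 ≠ 0 := by
  have := laR_pos i
  positivity

theorem pt_ext {x y : Pt} (h0 : x 0 = y 0) (h1 : x 1 = y 1) : x = y := by
  ext i; fin_cases i <;> assumption

theorem mem_ln (i : Fin 8) (x : Pt) : x ∈ range (ln i) ↔ ev i x = 0 := by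
  have hn := nsq_ne i
  constructor
  · rintro ⟨t, rfl⟩
    simp only [ev, ln]
    simp
    field_simp
    ring
  · intro h
    simp only [ev] at h
    refine ⟨((la i : ℝ) * x 1 - lb i * x 0) / ((la i : ℝ) ^ 2 + (lb i : ℝ) ^ 2), ?_⟩
    apply pt_ext
    · simp [ln]
      field_simp
      linear_combination (-(la i : ℝ)) * h
    · simp [ln]
      field_simp
      linear_combination (-(lb i : ℝ)) * h

theorem ln_cont (i : Fin 8) : Continuous (ln i) := by
  unfold ln
  fun_prop

theorem ln_inj (i : Fin 8) : Function.Injective (ln i) := by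
  intro s t h
  have h1 := congrArg (fun x : Pt => x 1) h
  simp [ln] at h1
  rcases h1 with h1 | h1
  · exact h1
  · exact absurd h1 (la_pos i).ne'

theorem ln_proper (i : Fin 8) :
    Filter.Tendsto (ln i) (Filter.cocompact ℝ) (Filter.cocompact Pt) := by
  have hc : Continuous (fun x : Pt => x 1) := by fun_prop
  refine Filter.Tendsto.mono_right ?_ (Filter.comap_cocompact_le hc)
  rw [Filter.tendsto_comap_iff]
  have hφ : ((fun x : Pt => x 1) ∘ ln i) =
      (Homeomorph.mulLeft₀ (la i : ℝ) (laR_pos i).ne').trans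
        (Homeomorph.addLeft (-((lc i : ℝ) * lb i) / ((la i : ℝ) ^ 2 + (lb i : ℝ) ^ 2))) := by
    funext t
    simp [ln]
  rw [hφ]
  exact (Homeomorph.isClosedEmbedding _).tendsto_cocompact

theorem ln_inter (i j : Fin 8) (hij : i ≠ j) :
    ∃ p : Pt, range (ln i) ∩ range (ln j) = {p} := by
  have hdZ : la i * lb j - la j * lb i ≠ 0 := by revert i j; decide
  have hd : (la i : ℝ) * lb j - la j * lb i ≠ 0 := by exact_mod_cast hdZ
  refine ⟨!₂[((lb i : ℝ) * lc j - lb j * lc i) / ((la i : ℝ) * lb j - la j * lb i),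
    ((la j : ℝ) * lc i - la i * lc j) / ((la i : ℝ) * lb j - la j * lb i)], ?_⟩
  ext x
  simp only [mem_inter_iff, mem_ln, mem_singleton_iff, ev]
  constructor
  · rintro ⟨h1, h2⟩
    apply pt_ext
    · simp
      rw [eq_div_iff hd]
      linear_combination (lb j : ℝ) * h1 - (lb i : ℝ) * h2
    · simp
      rw [eq_div_iff hd]
      linear_combination (-(la j : ℝ)) * h1 + (la i : ℝ) * h2
  · rintro rfl
    simp
    generalize hD : (la i : ℝ) * lb j - la j * lb i = D at hd ⊢
    constructor
    · field_simp
      linear_combination (-(lc i : ℝ)) * hD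
    · field_simp
      linear_combination (-(lc j : ℝ)) * hD

theorem gam_cont (e0 e1 e2 : ℤ) : Continuous (gam e0 e1 e2) := by
  unfold gam
  fun_prop

theorem gam_inj (e0 e1 e2 : ℤ) : Function.Injective (gam e0 e1 e2) := by
  intro s t h
  have h1 := congrArg (fun x : Pt => x 0) h
  simpa [gam] using h1

/-- The single-edge embedded graph. -/
noncomputable def EG (e0 e1 e2 : ℤ) : EmbeddedGraph (Fin 2) where
  pos := ![gam e0 e1 e2 0, gam e0 e1 e2 1]
  posInj := by
    have h01 : gam e0 e1 e2 0 ≠ gam e0 e1 e2 1 := fun h => zero_ne_one (gam_inj _ _ _ h)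
    intro u v h
    fin_cases u <;> fin_cases v <;> simp_all
  G := ⊤
  arc := fun _ _ _ => gam e0 e1 e2 '' Icc 0 1
  arc_symm := fun _ => rfl
  arc_curve := by
    intro u v h
    have hr : (fun t : ℝ => 1 - t) '' Icc 0 1 = Icc 0 1 := by simp
    fin_cases u <;> fin_cases v
    · exact absurd rfl h.ne
    · exact ⟨gam e0 e1 e2, (gam_cont _ _ _).continuousOn, (gam_inj _ _ _).injOn, rfl, rfl, rfl⟩
    · refine ⟨fun t => gam e0 e1 e2 (1 - t), ?_, ?_, by simp, by simp, ?_⟩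
      · exact ((gam_cont _ _ _).comp (by fun_prop)).continuousOn
      · intro s _ t _ hst
        have := gam_inj _ _ _ hst
        linarith
      · rw [← image_image (gam e0 e1 e2) (fun t : ℝ => 1 - t), hr]
    · exact absurd rfl h.ne
  arc_inter := by
    intro u v x y h h' hne
    exfalso
    have hu := h.ne
    have hx := h'.ne
    revert hne hu hx
    clear h h'
    revert u v x y
    decide
  arc_vertex := by
    intro u v h w hw
    clear hw
    have hu := h.ne
    clear h
    revert u v w
    decide

theorem adj01 (e0 e1 e2 : ℤ) : (EG e0 e1 e2).G.Adj 0 1 := by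
  change (⊤ : SimpleGraph (Fin 2)).Adj 0 1
  simp

/-- Ten times the value of functional `i` at the start of the arc. -/
def v0 (e0 : ℤ) (i : Fin 8) : ℤ := 10 * (-3 * la i + lc i) + lb i * e0

/-- Ten times the value of functional `i` at the end of the arc. -/
def v1 (e0 e1 e2 : ℤ) (i : Fin 8) : ℤ := 10 * (3 * la i + lc i) + lb i * (e0 + e1 + e2)

/-- Sufficient condition for monotonicity of all functionals along the arc. -/
def Mono (e1 e2 : ℤ) : Prop :=
  ∀ i : Fin 8, 0 < 60 * la i + lb i * e1 ∧ 0 < 60 * la i + lb i * e1 + 2 * (lb i * e2)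

theorem ev_gam (e0 e1 e2 : ℤ) (i : Fin 8) (t : ℝ) :
    10 * ev i (gam e0 e1 e2 t) =
      v0 e0 i + (60 * la i + lb i * e1) * t + (lb i * e2) * t ^ 2 := by
  simp [ev, gam, v0]
  ring

theorem ev_gam0 (e0 e1 e2 : ℤ) (i : Fin 8) : 10 * ev i (gam e0 e1 e2 0) = v0 e0 i := by
  rw [ev_gam]; ring

theorem ev_gam1 (e0 e1 e2 : ℤ) (i : Fin 8) : 10 * ev i (gam e0 e1 e2 1) = v1 e0 e1 e2 i := by
  rw [ev_gam]; simp [v0, v1]; ring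

theorem ev_mono {e0 e1 e2 : ℤ} (hm : Mono e1 e2) (i : Fin 8) {s t : ℝ} (hs : 0 ≤ s)
    (hst : s < t) (ht : t ≤ 1) : ev i (gam e0 e1 e2 s) < ev i (gam e0 e1 e2 t) := by
  obtain ⟨h1, h2⟩ := hm i
  have h1' : (0 : ℝ) < 60 * la i + lb i * e1 := by exact_mod_cast h1
  have h2' : (0 : ℝ) < 60 * la i + lb i * e1 + 2 * (lb i * e2) := by exact_mod_cast h2
  have hs' := ev_gam e0 e1 e2 i s
  have ht' := ev_gam e0 e1 e2 i t
  have key : 0 < (60 * la i + lb i * e1 : ℝ) + (lb i * e2) * (s + t) := by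
    have a1 : 0 < (60 * la i + lb i * e1 : ℝ) * (2 - (s + t)) :=
      mul_pos h1' (by linarith)
    have a2 : 0 ≤ (60 * la i + lb i * e1 + 2 * (lb i * e2) : ℝ) * (s + t) :=
      mul_nonneg h2'.le (by linarith)
    nlinarith
  have := mul_pos (sub_pos.2 hst) key
  nlinarith

theorem ev_inj {e0 e1 e2 : ℤ} (hm : Mono e1 e2) (i : Fin 8) {s t : ℝ} (hs : s ∈ Icc (0 : ℝ) 1)
    (ht : t ∈ Icc (0 : ℝ) 1) (h : ev i (gam e0 e1 e2 s) = ev i (gam e0 e1 e2 t)) : s = t := by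
  rcases lt_trichotomy s t with hlt | he | hgt
  · exact absurd h (ev_mono hm i hs.1 hlt ht.2).ne
  · exact he
  · exact absurd h (ev_mono hm i ht.1 hgt hs.2).ne'

theorem inter_subsingleton {e0 e1 e2 : ℤ} (hm : Mono e1 e2) (i : Fin 8) :
    (gam e0 e1 e2 '' Icc 0 1 ∩ range (ln i)).Subsingleton := by
  rintro _ ⟨⟨s, hs, rfl⟩, hs'⟩ _ ⟨⟨t, ht, rfl⟩, ht'⟩
  rw [mem_ln] at hs' ht'
  rw [ev_inj hm i hs ht (hs'.trans ht'.symm)]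

theorem not_sub {e0 e1 e2 : ℤ} (hm : Mono e1 e2) (i : Fin 8) :
    ¬ gam e0 e1 e2 '' Icc 0 1 ⊆ range (ln i) := by
  intro h
  have h0 := (mem_ln i _).1 (h (mem_image_of_mem _ (left_mem_Icc.2 zero_le_one)))
  have h1 := (mem_ln i _).1 (h (mem_image_of_mem _ (right_mem_Icc.2 zero_le_one)))
  have := ev_mono (e0 := e0) hm i le_rfl zero_lt_one le_rfl
  linarith

theorem isArrangement {e0 e1 e2 : ℤ} (hm : Mono e1 e2) : (EG e0 e1 e2).IsArrangement ln :=
  ⟨fun i => ⟨ln_cont i, ln_inj i, ln_proper i, fun _ => Or.inr (inter_subsingleton hm i)⟩,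
    ln_inter⟩

theorem stretchable_ln : Stretchable ln := by
  refine ⟨fun i => range (ln i), Homeomorph.refl _, fun i => ?_, fun i => by simp⟩
  refine ⟨ln i 0, !₂[-(lb i : ℝ), (la i : ℝ)], ?_, ?_⟩
  · intro h
    have h1 := congrArg (fun x : Pt => x 1) h
    simp at h1
    exact (la_pos i).ne' h1
  · ext x
    simp only [mem_range, mem_ofPred_eq]
    refine exists_congr fun t => ?_
    have : ln i t = ln i 0 + t • !₂[-(lb i : ℝ), (la i : ℝ)] := by
      apply pt_ext <;> simp [ln] <;> ring
    rw [this, eq_comm]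

theorem crossed_iff {e0 e1 e2 : ℤ} (hm : Mono e1 e2) (i : Fin 8) :
    i ∈ (EG e0 e1 e2).crossedSet ln (adj01 e0 e1 e2) ↔ v0 e0 i < 0 ∧ 0 < v1 e0 e1 e2 i := by
  have e0' := ev_gam0 e0 e1 e2 i
  have e1' := ev_gam1 e0 e1 e2 i
  have hv : (v0 e0 i < 0 ∧ 0 < v1 e0 e1 e2 i) ↔
      (ev i (gam e0 e1 e2 0) < 0 ∧ 0 < ev i (gam e0 e1 e2 1)) := by
    rw [← Int.cast_lt (R := ℝ), ← Int.cast_lt (R := ℝ), ← e0', ← e1']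
    constructor
    · rintro ⟨a, b⟩
      push_cast at a b
      constructor <;> linarith
    · rintro ⟨a, b⟩
      push_cast
      constructor <;> linarith
  rw [hv]
  change ((gam e0 e1 e2 '' Icc 0 1 \ {gam e0 e1 e2 0, gam e0 e1 e2 1}) ∩ range (ln i)).Nonempty ∧
    ¬ gam e0 e1 e2 '' Icc 0 1 ⊆ range (ln i) ↔ _
  constructor
  · rintro ⟨⟨_, ⟨⟨t, ht, rfl⟩, hne⟩, hl⟩, -⟩
    rw [mem_ln] at hl
    have ht0 : t ≠ 0 := by rintro rfl; simp at hne
    have ht1 : t ≠ 1 := by rintro rfl; simp at hne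
    exact ⟨(ev_mono hm i le_rfl (lt_of_le_of_ne ht.1 ht0.symm) ht.2).trans_eq hl,
      hl.symm.trans_lt (ev_mono hm i ht.1 (lt_of_le_of_ne ht.2 ht1) le_rfl)⟩
  · rintro ⟨h0, h1⟩
    refine ⟨?_, not_sub hm i⟩
    have hc : ContinuousOn (fun t => ev i (gam e0 e1 e2 t)) (Icc 0 1) := by
      have : Continuous (fun t => ev i (gam e0 e1 e2 t)) := by
        have := gam_cont e0 e1 e2
        unfold ev
        fun_prop
      exact this.continuousOn
    obtain ⟨t, ht, hz⟩ := intermediate_value_Icc zero_le_one hc ⟨h0.le, h1.le⟩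
    refine ⟨gam e0 e1 e2 t, ⟨mem_image_of_mem _ ht, ?_⟩, (mem_ln i _).2 hz⟩
    rintro (h | h)
    · simp only [h] at hz
      linarith
    · rw [mem_singleton_iff] at h
      simp only [h] at hz
      linarith

theorem crossed_ncard {e0 e1 e2 : ℤ} (hm : Mono e1 e2) {c : ℕ}
    (hc : (Finset.univ.filter fun i : Fin 8 => v0 e0 i < 0 ∧ 0 < v1 e0 e1 e2 i).card = c) :
    ((EG e0 e1 e2).crossedSet ln (adj01 e0 e1 e2)).ncard = c := by
  have : (EG e0 e1 e2).crossedSet ln (adj01 e0 e1 e2) =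
      ((Finset.univ.filter fun i : Fin 8 => v0 e0 i < 0 ∧ 0 < v1 e0 e1 e2 i : Finset (Fin 8)) :
        Set (Fin 8)) := by
    ext i
    rw [crossed_iff hm]
    simp
  rw [this, Set.ncard_coe_finset]
  rw [← hc]

theorem pos0_iff (e0 e1 e2 : ℤ) (i : Fin 8) :
    (EG e0 e1 e2).pos 0 ∈ range (ln i) ↔ v0 e0 i = 0 := by
  change gam e0 e1 e2 0 ∈ range (ln i) ↔ _
  rw [mem_ln, ← Int.cast_eq_zero (α := ℝ), ← ev_gam0 e0 e1 e2 i]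
  simp

theorem pos1_iff (e0 e1 e2 : ℤ) (i : Fin 8) :
    (EG e0 e1 e2).pos 1 ∈ range (ln i) ↔ v1 e0 e1 e2 i = 0 := by
  change gam e0 e1 e2 1 ∈ range (ln i) ↔ _
  rw [mem_ln, ← Int.cast_eq_zero (α := ℝ), ← ev_gam1 e0 e1 e2 i]
  simp

theorem arc_not_sub {e0 e1 e2 : ℤ} (hm : Mono e1 e2) (i : Fin 8) :
    ¬ (EG e0 e1 e2).arc (adj01 e0 e1 e2) ⊆ range (ln i) := not_sub hm i

theorem anchor_eq {e0 e1 e2 : ℤ} (hm : Mono e1 e2) :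
    (EG e0 e1 e2).anchorNum ln (adj01 e0 e1 e2) =
      if ∃ i j : Fin 8, i ≠ j ∧ v0 e0 i = 0 ∧ v1 e0 e1 e2 j = 0 then 2
      else if (∃ i, v0 e0 i = 0) ∨ ∃ i, v1 e0 e1 e2 i = 0 then 1 else 0 := by
  unfold EmbeddedGraph.anchorNum
  simp only [pos0_iff, pos1_iff, arc_not_sub hm, not_false_eq_true, and_true]

/-! ### Homeomorphisms preserve sides -/

theorem pos_of_seg {φ : Pt → ℝ} {ψ : Pt → ℝ} (hφ : Continuous φ)
    (hψ : ∀ x y : Pt, ∀ z ∈ segment ℝ x y, 0 < ψ x → 0 < ψ y → 0 < ψ z)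
    (hz : ∀ z, φ z = 0 → ψ z = 0) {x y : Pt} (hx : 0 < ψ x) (hy : 0 < ψ y)
    (h : 0 < φ x) : 0 < φ y := by
  by_contra hcon
  push Not at hcon
  have hconn : IsPreconnected (segment ℝ x y) := (convex_segment x y).isPreconnected
  obtain ⟨z, hzs, hz0⟩ := hconn.intermediate_value (right_mem_segment ℝ x y)
    (left_mem_segment ℝ x y) hφ.continuousOn ⟨hcon, h.le⟩
  exact (hψ x y z hzs hx hy).ne' (hz z hz0)

theorem affine_seg (a b c : ℝ) (x y : Pt) (z : Pt) (hz : z ∈ segment ℝ x y) :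
    ∃ s t : ℝ, 0 ≤ s ∧ 0 ≤ t ∧ s + t = 1 ∧
      a * z 0 + b * z 1 + c = s * (a * x 0 + b * x 1 + c) + t * (a * y 0 + b * y 1 + c) := by
  obtain ⟨s, t, hs, ht, hst, rfl⟩ := hz
  refine ⟨s, t, hs, ht, hst, ?_⟩
  simp
  linear_combination (-c) * hst

theorem affine_pos (a b c : ℝ) (x y : Pt) (z : Pt) (hz : z ∈ segment ℝ x y)
    (hx : 0 < a * x 0 + b * x 1 + c) (hy : 0 < a * y 0 + b * y 1 + c) :
    0 < a * z 0 + b * z 1 + c := by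
  obtain ⟨s, t, hs, ht, hst, h⟩ := affine_seg a b c x y z hz
  rw [h]
  rcases hs.eq_or_lt with rfl | hs
  · have : t = 1 := by linarith
    subst this
    linarith
  · have := mul_pos hs hx
    have := mul_nonneg ht hy.le
    linarith

theorem line_functional {l : Set Pt} (hl : IsLine l) :
    ∃ a b c : ℝ, ∀ x : Pt, x ∈ l ↔ a * x 0 + b * x 1 + c = 0 := by
  obtain ⟨p, d, hd, rfl⟩ := hl
  refine ⟨-d 1, d 0, d 1 * p 0 - d 0 * p 1, fun x => ?_⟩
  constructor
  · rintro ⟨t, rfl⟩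
    simp
    ring
  · intro h
    have hn : d 0 ^ 2 + d 1 ^ 2 ≠ 0 := by
      intro h0
      apply hd
      apply pt_ext
      · simp; nlinarith [sq_nonneg (d 0), sq_nonneg (d 1)]
      · simp; nlinarith [sq_nonneg (d 0), sq_nonneg (d 1)]
    refine ⟨(d 0 * (x 0 - p 0) + d 1 * (x 1 - p 1)) / (d 0 ^ 2 + d 1 ^ 2), ?_⟩
    apply pt_ext
    · simp
      field_simp
      linear_combination (-d 1) * h
    · simp
      field_simp
      linear_combination (d 0) * h

/-- Each line of a drawing has a functional whose sign pattern matches the original one. -/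
theorem functional_sign (h : Pt ≃ₜ Pt) (i : Fin 8) {l : Set Pt} (hl : IsLine l)
    (him : h '' range (ln i) = l) :
    ∃ a b c : ℝ, ∀ x : Pt,
      (0 < ev i x → 0 < a * h x 0 + b * h x 1 + c) ∧
      (ev i x < 0 → a * h x 0 + b * h x 1 + c < 0) ∧
      (ev i x = 0 → a * h x 0 + b * h x 1 + c = 0) := by
  obtain ⟨a, b, c, habc⟩ := line_functional hl
  have hzero : ∀ x, ev i x = 0 ↔ a * h x 0 + b * h x 1 + c = 0 := by
    intro x
    rw [← habc, ← him, ← mem_ln]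
    exact (h.injective.mem_set_image).symm
  have hevc : Continuous (ev i) := by unfold ev; fun_prop
  obtain ⟨x0, hx0⟩ : ∃ x0 : Pt, 0 < ev i x0 := by
    have := laR_pos i
    refine ⟨!₂[(1 - lc i) / la i, 0], ?_⟩
    simp [ev]
    field_simp
    linarith
  have main : ∀ a b c : ℝ, (∀ x, ev i x = 0 ↔ a * h x 0 + b * h x 1 + c = 0) →
      0 < a * h x0 0 + b * h x0 1 + c → ∀ x : Pt,
      (0 < ev i x → 0 < a * h x 0 + b * h x 1 + c) ∧
      (ev i x < 0 → a * h x 0 + b * h x 1 + c < 0) ∧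
      (ev i x = 0 → a * h x 0 + b * h x 1 + c = 0) := by
    clear hzero habc a b c
    intro a b c hz hp x
    have hc := h.continuous
    have hc' := h.symm.continuous
    have hgc : Continuous fun x : Pt => a * h x 0 + b * h x 1 + c := by fun_prop
    refine ⟨fun hx => ?_, fun hx => ?_, (hz x).1⟩
    · exact pos_of_seg (φ := fun x : Pt => a * h x 0 + b * h x 1 + c) (ψ := ev i) hgc
        (fun x y z hzs h1 h2 => affine_pos _ _ _ x y z hzs h1 h2) (fun z hz0 => (hz z).2 hz0)
        hx0 hx hp
    · by_contra hcon
      push Not at hcon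
      rcases hcon.eq_or_lt with h0 | hpos
      · exact hx.ne ((hz x).2 h0.symm)
      · have := pos_of_seg (φ := fun y : Pt => ev i (h.symm y))
          (ψ := fun y : Pt => a * y 0 + b * y 1 + c) (hevc.comp hc')
          (fun x y z hzs h1 h2 => affine_pos _ _ _ x y z hzs h1 h2)
          (fun z hz0 => by simpa using (hz (h.symm z)).1 hz0)
          (x := h x0) (y := h x) hp hpos (by simpa using hx0)
        simp at this
        linarith
  have hne : a * h x0 0 + b * h x0 1 + c ≠ 0 := fun h0 => hx0.ne' ((hzero x0).2 h0)
  rcases hne.lt_or_gt with hneg | hpos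
  · refine ⟨-a, -b, -c, main _ _ _ (fun x => ?_) (by linarith)⟩
    rw [hzero]
    constructor <;> intro h <;> linarith
  · exact ⟨a, b, c, main _ _ _ hzero hpos⟩

/-! ### Pappus' theorem -/

/-- Pappus' theorem in the affine frame given by the two carrier lines. -/
theorem pappus_frame {α1 α2 α3 β1 β2 β3 xP yP xQ yQ xR yR : ℝ}
    (ha1 : α1 ≠ 0) (ha2 : α2 ≠ 0) (ha3 : α3 ≠ 0) (hb2 : β2 ≠ 0)
    (hb13 : β1 ≠ β3)
    (p1 : xP * β2 + yP * α1 = α1 * β2) (p2 : xP * β1 + yP * α2 = α2 * β1)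
    (q1 : xQ * β3 + yQ * α1 = α1 * β3) (q2 : xQ * β1 + yQ * α3 = α3 * β1)
    (r1 : xR * β3 + yR * α2 = α2 * β3) (r2 : xR * β2 + yR * α3 = α3 * β2) :
    (xQ - xP) * (yR - yP) - (yQ - yP) * (xR - xP) = 0 := by
  have P1 : (α2 * β2 - α1 * β1) * xP = α1 * α2 * (β2 - β1) := by
    linear_combination α2 * p1 - α1 * p2
  have P2 : (α2 * β2 - α1 * β1) * yP = β1 * β2 * (α2 - α1) := by
    linear_combination β2 * p2 - β1 * p1
  have Q1 : (α3 * β3 - α1 * β1) * xQ = α1 * α3 * (β3 - β1) := by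
    linear_combination α3 * q1 - α1 * q2
  have Q2 : (α3 * β3 - α1 * β1) * yQ = β1 * β3 * (α3 - α1) := by
    linear_combination β3 * q2 - β1 * q1
  have R1 : (α3 * β3 - α2 * β2) * xR = α2 * α3 * (β3 - β2) := by
    linear_combination α3 * r1 - α2 * r2
  have R2 : (α3 * β3 - α2 * β2) * yR = β2 * β3 * (α3 - α2) := by
    linear_combination β3 * r2 - β2 * r1
  have hD : α3 * β3 - α1 * β1 ≠ 0 := by
    intro h0
    rw [h0, zero_mul] at Q1
    have : α1 * α3 * (β3 - β1) ≠ 0 := mul_ne_zero (mul_ne_zero ha1 ha3) (sub_ne_zero.2 hb13.symm)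
    exact this Q1.symm
  have hx : α2 * β2 * (α3 * β3 - α1 * β1) * xQ = α3 * β3 * (α2 * β2 - α1 * β1) * xP +
      α1 * β1 * (α3 * β3 - α2 * β2) * xR := by
    linear_combination α2 * β2 * Q1 - α3 * β3 * P1 - α1 * β1 * R1
  have hy : α2 * β2 * (α3 * β3 - α1 * β1) * yQ = α3 * β3 * (α2 * β2 - α1 * β1) * yP +
      α1 * β1 * (α3 * β3 - α2 * β2) * yR := by
    linear_combination α2 * β2 * Q2 - α3 * β3 * P2 - α1 * β1 * R2
  have hc : α2 * β2 * (α3 * β3 - α1 * β1) ≠ 0 := mul_ne_zero (mul_ne_zero ha2 hb2) hD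
  apply (mul_eq_zero.1 _).resolve_left hc
  linear_combination (yR - yP) * hx - (xR - xP) * hy

/-- Signed area. -/
def br (a b p : Pt) : ℝ := (b 0 - a 0) * (p 1 - a 1) - (b 1 - a 1) * (p 0 - a 0)

theorem br_zero {a b c : ℝ} {x y z w : Pt} (hx : a * x 0 + b * x 1 + c = 0)
    (hy : a * y 0 + b * y 1 + c = 0) (hz : a * z 0 + b * z 1 + c = 0)
    (hw : a * w 0 + b * w 1 + c ≠ 0) : br x y z = 0 := by
  have e1 : a * br x y z = 0 := by
    unfold br
    linear_combination (z 1 - x 1) * (hy - hx) - (y 1 - x 1) * (hz - hx)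
  have e2 : b * br x y z = 0 := by
    unfold br
    linear_combination (y 0 - x 0) * (hz - hx) - (z 0 - x 0) * (hy - hx)
  rcases mul_eq_zero.1 e1 with ha | h
  · rcases mul_eq_zero.1 e2 with hb | h
    · exfalso
      apply hw
      rw [ha, hb] at hx ⊢
      linarith
    · exact h
  · exact h

theorem br_coord (a b c a' b' c' : ℝ) (x y z : Pt) :
    ((a * y 0 + b * y 1 + c) - (a * x 0 + b * x 1 + c)) *
        ((a' * z 0 + b' * z 1 + c') - (a' * x 0 + b' * x 1 + c')) -
      ((a' * y 0 + b' * y 1 + c') - (a' * x 0 + b' * x 1 + c')) *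
        ((a * z 0 + b * z 1 + c) - (a * x 0 + b * x 1 + c)) =
      (a * b' - b * a') * br x y z := by
  unfold br
  ring

/-! ### The contradiction -/

theorem ev0 (x : Pt) : ev 0 x = 1 * x 0 + (-2) * x 1 + (15) := by
  have h1 : la 0 = 1 := rfl
  have h2 : lb 0 = -2 := rfl
  have h3 : lc 0 = 15 := rfl
  rw [ev, h1, h2, h3]; push_cast; ring

theorem ev1 (x : Pt) : ev 1 x = 1 * x 0 + (-5) * x 1 + (-24) := by
  have h1 : la 1 = 1 := rfl
  have h2 : lb 1 = -5 := rfl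
  have h3 : lc 1 = -24 := rfl
  rw [ev, h1, h2, h3]; push_cast; ring

theorem ev2 (x : Pt) : ev 2 x = 5 * x 0 + (2) * x 1 + (15) := by
  have h1 : la 2 = 5 := rfl
  have h2 : lb 2 = 2 := rfl
  have h3 : lc 2 = 15 := rfl
  rw [ev, h1, h2, h3]; push_cast; ring

theorem ev3 (x : Pt) : ev 3 x = 2 * x 0 + (-1) * x 1 + (6) := by
  have h1 : la 3 = 2 := rfl
  have h2 : lb 3 = -1 := rfl
  have h3 : lc 3 = 6 := rfl
  rw [ev, h1, h2, h3]; push_cast; ring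

theorem ev4 (x : Pt) : ev 4 x = 1 * x 0 + (1) * x 1 + (0) := by
  have h1 : la 4 = 1 := rfl
  have h2 : lb 4 = 1 := rfl
  have h3 : lc 4 = 0 := rfl
  rw [ev, h1, h2, h3]; push_cast; ring

theorem ev5 (x : Pt) : ev 5 x = 1 * x 0 + (-1) * x 1 + (0) := by
  have h1 : la 5 = 1 := rfl
  have h2 : lb 5 = -1 := rfl
  have h3 : lc 5 = 0 := rfl
  rw [ev, h1, h2, h3]; push_cast; ring

theorem ev6 (x : Pt) : ev 6 x = 4 * x 0 + (1) * x 1 + (-12) := by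
  have h1 : la 6 = 4 := rfl
  have h2 : lb 6 = 1 := rfl
  have h3 : lc 6 = -12 := rfl
  rw [ev, h1, h2, h3]; push_cast; ring

theorem ev7 (x : Pt) : ev 7 x = 5 * x 0 + (-4) * x 1 + (-15) := by
  have h1 : la 7 = 5 := rfl
  have h2 : lb 7 = -4 := rfl
  have h3 : lc 7 = -15 := rfl
  rw [ev, h1, h2, h3]; push_cast; ring

theorem two_zeros {p q r p' q' r' : ℝ} {X Y : Pt} (hXY : X ≠ Y)
    (h1 : p * X 0 + q * X 1 + r = 0) (h2 : p * Y 0 + q * Y 1 + r = 0)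
    (h1' : p' * X 0 + q' * X 1 + r' = 0) (h2' : p' * Y 0 + q' * Y 1 + r' = 0) (x y : Pt) :
    (p * x 0 + q * x 1 + r) * (p' * y 0 + q' * y 1 + r') =
      (p * y 0 + q * y 1 + r) * (p' * x 0 + q' * x 1 + r') := by
  have hdet : p * q' - q * p' = 0 := by
    by_contra hne
    apply hXY
    apply pt_ext
    · apply mul_left_cancel₀ hne
      linear_combination q' * (h1 - h2) - q * (h1' - h2')
    · apply mul_left_cancel₀ hne
      linear_combination p * (h1' - h2') - p' * (h1 - h2)
  have hr : r = -(p * X 0 + q * X 1) := by linarith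
  have hr' : r' = -(p' * X 0 + q' * X 1) := by linarith
  rw [hr, hr']
  linear_combination ((x 0 - X 0) * (y 1 - X 1) - (x 1 - X 1) * (y 0 - X 0)) * hdet

theorem zero_of_br {p q r : ℝ} {X Y Z : Pt} (hXZ : X ≠ Z) (hb : br X Y Z = 0)
    (h1 : p * X 0 + q * X 1 + r = 0) (h2 : p * Z 0 + q * Z 1 + r = 0) :
    p * Y 0 + q * Y 1 + r = 0 := by
  unfold br at hb
  by_contra hne
  apply hXZ
  apply pt_ext
  · apply mul_left_cancel₀ hne
    linear_combination q * hb + (Y 0 - X 0) * (h1 - h2) + (X 0 - Z 0) * h1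
  · apply mul_left_cancel₀ hne
    linear_combination (-p) * hb + (Y 1 - X 1) * (h1 - h2) + (X 1 - Z 1) * h1

theorem three_forms {p q r p' q' r' p2 q2 r2 : ℝ} {X : Pt}
    (h : p * X 0 + q * X 1 + r = 0) (h' : p' * X 0 + q' * X 1 + r' = 0)
    (h2 : p2 * X 0 + q2 * X 1 + r2 = 0) (x y z : Pt) :
    (p * x 0 + q * x 1 + r) * ((p' * y 0 + q' * y 1 + r') * (p2 * z 0 + q2 * z 1 + r2) -
        (p' * z 0 + q' * z 1 + r') * (p2 * y 0 + q2 * y 1 + r2)) +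
      (p * y 0 + q * y 1 + r) * ((p' * z 0 + q' * z 1 + r') * (p2 * x 0 + q2 * x 1 + r2) -
        (p' * x 0 + q' * x 1 + r') * (p2 * z 0 + q2 * z 1 + r2)) +
      (p * z 0 + q * z 1 + r) * ((p' * x 0 + q' * x 1 + r') * (p2 * y 0 + q2 * y 1 + r2) -
        (p' * y 0 + q' * y 1 + r') * (p2 * x 0 + q2 * x 1 + r2)) = 0 := by
  have hr : r = -(p * X 0 + q * X 1) := by linarith
  have hr' : r' = -(p' * X 0 + q' * X 1) := by linarith
  have hr2 : r2 = -(p2 * X 0 + q2 * X 1) := by linarith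
  rw [hr, hr', hr2]
  ring

set_option maxHeartbeats 2000000 in
/-- If the edge starts weakly above `P`, ends weakly above `R` and passes strictly below `Q`,
then no aligned straight-line drawing exists. -/
theorem not_drawable {e0 e1 e2 : ℤ} (hu : 0 ≤ e0) (hv : 0 ≤ e0 + e1 + e2)
    (hy : 4 * e0 + 2 * e1 + e2 < 0) :
    ¬ ∃ (Γ : Fin 2 → Pt) (L : Fin 8 → Set Pt), (EG e0 e1 e2).IsAlignedDrawing ln Γ L := by
  rintro ⟨Γ, L, hL, h, hpos, harc, hlines⟩
  choose a b c hg using fun i => functional_sign h i (hL i) (hlines i)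
  have huR : (0 : ℝ) ≤ e0 := by exact_mod_cast hu
  have hvR : (0 : ℝ) ≤ (e0 : ℝ) + e1 + e2 := by exact_mod_cast hv
  have hyR : 4 * (e0 : ℝ) + 2 * e1 + e2 < 0 := by exact_mod_cast hy
  -- the relevant points of the arc
  have hseg : h (gam e0 e1 e2 (1 / 2)) ∈ segment ℝ (h (gam e0 e1 e2 0)) (h (gam e0 e1 e2 1)) := by
    have h0 : h (gam e0 e1 e2 0) = Γ 0 := hpos 0
    have h1 : h (gam e0 e1 e2 1) = Γ 1 := hpos 1
    rw [h0, h1, ← harc (adj01 e0 e1 e2)]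
    exact mem_image_of_mem _ (mem_image_of_mem _ (by constructor <;> norm_num))
  -- evaluation of the image functionals
  let g : Fin 8 → Pt → ℝ := fun i x => a i * h x 0 + b i * h x 1 + c i
  have gp : ∀ i x, 0 < ev i x → 0 < g i x := fun i x => (hg i x).1
  have gn : ∀ i x, ev i x < 0 → g i x < 0 := fun i x => (hg i x).2.1
  have gz : ∀ i x, ev i x = 0 → g i x = 0 := fun i x => (hg i x).2.2
  have gnn : ∀ i x, 0 ≤ ev i x → 0 ≤ g i x := fun i x hx => by
    rcases hx.eq_or_lt with h0 | h1
    · exact (gz i x h0.symm).ge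
    · exact (gp i x h1).le
  have gnp : ∀ i x, ev i x ≤ 0 → g i x ≤ 0 := fun i x hx => by
    rcases hx.eq_or_lt with h0 | h1
    · exact (gz i x h0).le
    · exact (gn i x h1).le
  -- the nine points
  let A1 : Pt := !₂[-5, 5]
  let A2 : Pt := !₂[1, 8]
  let A3 : Pt := !₂[15, 15]
  let B1 : Pt := !₂[-6, -6]
  let B2 : Pt := !₂[-1, -5]
  let B3 : Pt := !₂[4, -4]
  let P : Pt := !₂[-3, 0]
  let Q : Pt := !₂[0, 0]
  let R : Pt := !₂[3, 0]
  let O : Pt := !₂[-41, -13]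
  -- incidences
  have z0O : g 0 O = 0 := gz _ _ (by norm_num [ev0, O])
  have z1O : g 1 O = 0 := gz _ _ (by norm_num [ev1, O])
  have z0A1 : g 0 A1 = 0 := gz _ _ (by norm_num [ev0, A1])
  have z0A2 : g 0 A2 = 0 := gz _ _ (by norm_num [ev0, A2])
  have z0A3 : g 0 A3 = 0 := gz _ _ (by norm_num [ev0, A3])
  have z1B1 : g 1 B1 = 0 := gz _ _ (by norm_num [ev1, B1])
  have z1B2 : g 1 B2 = 0 := gz _ _ (by norm_num [ev1, B2])
  have z1B3 : g 1 B3 = 0 := gz _ _ (by norm_num [ev1, B3])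
  have z2A1 : g 2 A1 = 0 := gz _ _ (by norm_num [ev2, A1])
  have z2B2 : g 2 B2 = 0 := gz _ _ (by norm_num [ev2, B2])
  have z2P : g 2 P = 0 := gz _ _ (by norm_num [ev2, P])
  have z3A2 : g 3 A2 = 0 := gz _ _ (by norm_num [ev3, A2])
  have z3B1 : g 3 B1 = 0 := gz _ _ (by norm_num [ev3, B1])
  have z3P : g 3 P = 0 := gz _ _ (by norm_num [ev3, P])
  have z4A1 : g 4 A1 = 0 := gz _ _ (by norm_num [ev4, A1])
  have z4B3 : g 4 B3 = 0 := gz _ _ (by norm_num [ev4, B3])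
  have z4Q : g 4 Q = 0 := gz _ _ (by norm_num [ev4, Q])
  have z5A3 : g 5 A3 = 0 := gz _ _ (by norm_num [ev5, A3])
  have z5B1 : g 5 B1 = 0 := gz _ _ (by norm_num [ev5, B1])
  have z5Q : g 5 Q = 0 := gz _ _ (by norm_num [ev5, Q])
  have z6A2 : g 6 A2 = 0 := gz _ _ (by norm_num [ev6, A2])
  have z6B3 : g 6 B3 = 0 := gz _ _ (by norm_num [ev6, B3])
  have z6R : g 6 R = 0 := gz _ _ (by norm_num [ev6, R])
  have z7A3 : g 7 A3 = 0 := gz _ _ (by norm_num [ev7, A3])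
  have z7B2 : g 7 B2 = 0 := gz _ _ (by norm_num [ev7, B2])
  have z7R : g 7 R = 0 := gz _ _ (by norm_num [ev7, R])
  -- signs
  have s1A1 : g 1 A1 < 0 := gn _ _ (by norm_num [ev1, A1])
  have s1A2 : g 1 A2 < 0 := gn _ _ (by norm_num [ev1, A2])
  have s1A3 : g 1 A3 < 0 := gn _ _ (by norm_num [ev1, A3])
  have s0B2 : 0 < g 0 B2 := gp _ _ (by norm_num [ev0, B2])
  have s2R : 0 < g 2 R := gp _ _ (by norm_num [ev2, R])
  have s3R : 0 < g 3 R := gp _ _ (by norm_num [ev3, R])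
  have s2A2 : 0 < g 2 A2 := gp _ _ (by norm_num [ev2, A2])
  have s3A1 : g 3 A1 < 0 := gn _ _ (by norm_num [ev3, A1])
  have s4A3 : 0 < g 4 A3 := gp _ _ (by norm_num [ev4, A3])
  have s5A1 : g 5 A1 < 0 := gn _ _ (by norm_num [ev5, A1])
  have s5B3 : 0 < g 5 B3 := gp _ _ (by norm_num [ev5, B3])
  have s6P : g 6 P < 0 := gn _ _ (by norm_num [ev6, P])
  have s7P : g 7 P < 0 := gn _ _ (by norm_num [ev7, P])
  have s6A3 : 0 < g 6 A3 := gp _ _ (by norm_num [ev6, A3])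
  have s7A2 : g 7 A2 < 0 := gn _ _ (by norm_num [ev7, A2])
  -- signs at the three points of the arc
  have s2u : 0 ≤ g 2 (gam e0 e1 e2 0) := gnn _ _ (by
    simp [ev2, gam]; linarith)
  have s3u : g 3 (gam e0 e1 e2 0) ≤ 0 := gnp _ _ (by
    simp [ev3, gam]; linarith)
  have s6v : 0 ≤ g 6 (gam e0 e1 e2 1) := gnn _ _ (by
    simp [ev6, gam]; linarith)
  have s7v : g 7 (gam e0 e1 e2 1) ≤ 0 := gnp _ _ (by
    simp [ev7, gam]; linarith)
  have s4y : g 4 (gam e0 e1 e2 (1 / 2)) < 0 := gn _ _ (by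
    simp [ev4, gam]; linarith)
  have s5y : 0 < g 5 (gam e0 e1 e2 (1 / 2)) := gp _ _ (by
    simp [ev5, gam]; linarith)
  generalize gam e0 e1 e2 0 = u at *
  generalize gam e0 e1 e2 1 = v at *
  generalize gam e0 e1 e2 (1 / 2) = y at *
  clear_value A1 A2 A3 B1 B2 B3 P Q R O
  -- Pappus
  have K : a 1 * b 0 - b 1 * a 0 ≠ 0 := by
    intro hK
    have e1 : b 0 * g 1 A1 = 0 := by
      simp only [g] at z0O z1O z0A1 ⊢
      linear_combination (h A1 0 - h O 0) * hK + b 1 * (z0A1 - z0O) + b 0 * z1O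
    have e2 : a 0 * g 1 A1 = 0 := by
      simp only [g] at z0O z1O z0A1 ⊢
      linear_combination (-(h A1 1 - h O 1)) * hK + a 1 * (z0A1 - z0O) + a 0 * z1O
    have hb0 := (mul_eq_zero.1 e1).resolve_right s1A1.ne
    have ha0 := (mul_eq_zero.1 e2).resolve_right s1A1.ne
    simp only [g, hb0, ha0] at z0O s0B2
    linarith
  have col : br (h P) (h Q) (h R) = 0 := by
    apply (mul_eq_zero.1 _).resolve_left K
    rw [← br_coord (a 1) (b 1) (c 1) (a 0) (b 0) (c 0)]
    have inc : ∀ (i : Fin 8) (x y z w : Pt), g i x = 0 → g i y = 0 → g i z = 0 → g i w ≠ 0 →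
        (g 1 y - g 1 x) * (g 0 z - g 0 x) - (g 0 y - g 0 x) * (g 1 z - g 1 x) = 0 := by
      intro i x y z w hx hy hz hw
      have := br_coord (a 1) (b 1) (c 1) (a 0) (b 0) (c 0) (h x) (h y) (h z)
      rw [br_zero hx hy hz hw, mul_zero] at this
      exact this
    have p1 := inc 2 A1 B2 P R z2A1 z2B2 z2P s2R.ne'
    have p2 := inc 3 A2 B1 P R z3A2 z3B1 z3P s3R.ne'
    have q1 := inc 4 A1 B3 Q A3 z4A1 z4B3 z4Q s4A3.ne'
    have q2 := inc 5 A3 B1 Q A1 z5A3 z5B1 z5Q s5A1.ne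
    have r1 := inc 6 A2 B3 R P z6A2 z6B3 z6R s6P.ne
    have r2 := inc 7 A3 B2 R P z7A3 z7B2 z7R s7P.ne
    rw [z0A1, z1B2] at p1
    rw [z0A2, z1B1] at p2
    rw [z0A1, z1B3] at q1
    rw [z0A3, z1B1] at q2
    rw [z0A2, z1B3] at r1
    rw [z0A3, z1B2] at r2
    have hb13 : g 0 B1 ≠ g 0 B3 := by
      intro he
      have hB : h B1 = h B3 := by
        simp only [g] at he z1B1 z1B3
        apply pt_ext
        · apply mul_left_cancel₀ K
          linear_combination b 0 * (z1B1 - z1B3) - b 1 * he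
        · apply mul_left_cancel₀ K
          linear_combination a 1 * he - a 0 * (z1B1 - z1B3)
      simp only [g, hB] at z5B1 s5B3
      linarith
    exact pappus_frame (xP := g 1 P) (yP := g 0 P) (xQ := g 1 Q) (yQ := g 0 Q) (xR := g 1 R)
      (yR := g 0 R) s1A1.ne s1A2.ne s1A3.ne s0B2.ne' hb13 (by linarith) (by linarith)
      (by linarith) (by linarith) (by linarith) (by linarith)
  -- the functional of the line through the images of `P` and `R`
  let f : Pt → ℝ := fun x => g 3 R * g 2 x - g 2 R * g 3 x
  have fA1 : 0 < f A1 := by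
    simp only [f, z2A1]
    linarith only [mul_pos s2R (neg_pos.2 s3A1)]
  have fA2 : 0 < f A2 := by
    simp only [f, z3A2]
    linarith only [mul_pos s3R s2A2]
  have fu : 0 ≤ f u := by
    simp only [f]
    linarith only [mul_nonneg s3R.le s2u, mul_nonneg s2R.le (neg_nonneg.2 s3u)]
  let f' : Pt → ℝ := fun x => g 7 P * g 6 x - g 6 P * g 7 x
  have hPR : h P ≠ h R := by
    intro he
    simp only [g, he] at z2P s2R
    linarith
  have fexp : ∀ x, f x = (g 3 R * a 2 - g 2 R * a 3) * h x 0 +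
      (g 3 R * b 2 - g 2 R * b 3) * h x 1 + (g 3 R * c 2 - g 2 R * c 3) := by
    intro x
    simp only [f, g]
    ring
  have fexp' : ∀ x, f' x = (g 7 P * a 6 - g 6 P * a 7) * h x 0 +
      (g 7 P * b 6 - g 6 P * b 7) * h x 1 + (g 7 P * c 6 - g 6 P * c 7) := by
    intro x
    simp only [f', g]
    ring
  have fP : f P = 0 := by simp only [f, z2P, z3P]; ring
  have fR : f R = 0 := by simp only [f]; ring
  have f'P : f' P = 0 := by simp only [f']; ring
  have f'R : f' R = 0 := by simp only [f', z6R, z7R]; ring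
  have prop : ∀ x y, f x * f' y = f y * f' x := by
    intro x y
    have := two_zeros hPR ((fexp P).symm.trans fP) ((fexp R).symm.trans fR)
      ((fexp' P).symm.trans f'P) ((fexp' R).symm.trans f'R) (h x) (h y)
    rwa [← fexp, ← fexp, ← fexp', ← fexp'] at this
  have f'A2 : f' A2 < 0 := by
    simp only [f', z6A2]
    linarith only [mul_pos_of_neg_of_neg s6P s7A2]
  have f'A3 : f' A3 < 0 := by
    simp only [f', z7A3]
    linarith only [mul_neg_of_neg_of_pos s7P s6A3]
  have f'v : f' v ≤ 0 := by
    simp only [f']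
    linarith only [mul_nonneg_of_nonpos_of_nonpos s6P.le s7v, mul_nonneg (neg_nonneg.2 s7P.le) s6v]
  have fA3 : 0 < f A3 := by
    have := prop A3 A2
    by_contra hcon
    push Not at hcon
    linarith only [this, mul_neg_of_pos_of_neg fA2 f'A3,
      mul_nonneg_of_nonpos_of_nonpos hcon f'A2.le]
  have fv : 0 ≤ f v := by
    have := prop v A2
    by_contra hcon
    push Not at hcon
    linarith only [this, mul_pos_of_neg_of_neg hcon f'A2, mul_nonneg fA2.le (neg_nonneg.2 f'v)]
  have fQ : f Q = 0 := by
    have := zero_of_br hPR col ((fexp P).symm.trans fP) ((fexp R).symm.trans fR)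
    rwa [← fexp] at this
  have tri : f y * (g 4 A3 * g 5 A1) = f A1 * (g 4 A3 * g 5 y) + f A3 * (g 4 y * g 5 A1) := by
    have key := three_forms ((fexp Q).symm.trans fQ) z4Q z5Q (h y) (h A1) (h A3)
    rw [← fexp, ← fexp, ← fexp] at key
    change f y * (g 4 A1 * g 5 A3 - g 4 A3 * g 5 A1) + f A1 * (g 4 A3 * g 5 y - g 4 y * g 5 A3) +
      f A3 * (g 4 y * g 5 A1 - g 4 A1 * g 5 y) = 0 at key
    rw [z4A1, z5A3] at key
    linarith
  have fy : f y < 0 := by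
    have t1 := mul_pos fA1 (mul_pos s4A3 s5y)
    have t2 := mul_pos fA3 (mul_pos_of_neg_of_neg s4y s5A1)
    have t3 := mul_neg_of_pos_of_neg s4A3 s5A1
    by_contra hcon
    push Not at hcon
    linarith only [tri, t1, t2, mul_nonneg hcon (neg_nonneg.2 t3.le)]
  obtain ⟨s, t, hs, ht, -, hst⟩ := affine_seg (g 3 R * a 2 - g 2 R * a 3)
    (g 3 R * b 2 - g 2 R * b 3) (g 3 R * c 2 - g 2 R * c 3) _ _ _ hseg
  have hst' : f y = s * f u + t * f v := by
    simp only [f, g] at hst ⊢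
    linarith
  have := mul_nonneg hs fu
  have := mul_nonneg ht fv
  linarith

theorem bad {e0 e1 e2 : ℤ} {k m : ℕ} (hm : Mono e1 e2) (hu : 0 ≤ e0) (hv : 0 ≤ e0 + e1 + e2)
    (hy : 4 * e0 + 2 * e1 + e2 < 0)
    (hk : (EG e0 e1 e2).anchorNum ln (adj01 e0 e1 e2) = k)
    (hc : (Finset.univ.filter fun i : Fin 8 => v0 e0 i < 0 ∧ 0 < v1 e0 e1 e2 i).card = m) :
    ExistsBadSingleEdge k m :=
  ⟨EG e0 e1 e2, ln, adj01 e0 e1 e2, isArrangement hm, stretchable_ln, hk, crossed_ncard hm hc,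
    fun ⟨i, hi⟩ => arc_not_sub hm i hi, not_drawable hu hv hy⟩

theorem mono04 : Mono (-8) 8 := by unfold Mono; decide
theorem mono13 : Mono (-3) 4 := by unfold Mono; decide
theorem mono22 : Mono (-4) 4 := by unfold Mono; decide

end PappusEdge

/-- There exist stretchable arrangements of 8 pseudolines with a
single edge — 0-anchored and 4-crossed, resp. 1-anchored and 3-crossed, resp.
2-anchored and 2-crossed — that have no straight-line aligned drawing. -/
theorem pappus_single_edge_not_drawable :
    ExistsBadSingleEdge 0 4 ∧ ExistsBadSingleEdge 1 3 ∧ ExistsBadSingleEdge 2 2 := by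
  refine ⟨PappusEdge.bad (e0 := 1) PappusEdge.mono04 (by norm_num) (by norm_num) (by norm_num)
      ?_ (by decide),
    PappusEdge.bad (e0 := 0) PappusEdge.mono13 (by norm_num) (by norm_num) (by norm_num)
      ?_ (by decide),
    PappusEdge.bad (e0 := 0) PappusEdge.mono22 (by norm_num) (by norm_num) (by norm_num)
      ?_ (by decide)⟩
  · rw [PappusEdge.anchor_eq PappusEdge.mono04, if_neg (by decide), if_neg (by decide)]
  · rw [PappusEdge.anchor_eq PappusEdge.mono13, if_neg (by decide), if_pos (by decide)]
  · rw [PappusEdge.anchor_eq PappusEdge.mono22, if_pos (by decide)]
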